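/- Let L be a finite lattice with N elements, let (a_1,…,a_N) be a linear extension of L (an enumeration of all elements of L with a_i < a_j implying i < j), and let φ : L → ℝ be nonnegative and completely monotone. Set φ_0 = φ and φ_i = Λ_{a_i} φ_{i−1} for i = 1,…,N. Then φ_N ≡ 0, and for any choice of Ψ_0,…,Ψ_{N−1} ∈ M_∞(𝓛) with Π(Ψ_i) = λ(φ_i; a_{i+1}, ·) for i = 0,…,N−1, the sum Φ = Σ_{i=0}^{N−1} Ψ_i is the Möbius extension of φ, i.e., Φ(U) = Σ{f(x) : x ∈ L, ⟨x⟩* ⪯ U} where f is the Möbius inverse of φ on L. -/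

import Mathlib

/-!
Complete monotonicity of a nonnegative `φ` means exactly that its Möbius inverse `f` is
nonnegative: `∇_{b_1,…,b_n} φ(x)` is the sum of `f(y)` over those `y ≤ x` that lie below no `b_i`
(`succDiff_eq`), and choosing the `b_i` to be all elements not above `x` leaves only `f(x)`.

For a function `ψ` with nonnegative Möbius inverse `g`, the key identity is `λ(ψ; a, x) = ψ(a ∧ x)`
(`lam_eq`). Expanding `ψ(H)` through `g`, the coefficient of `g(y)` is the number of vertices
above `y` minus the number of edges whose join is above `y`. If some vertex `r` is not above `y`,
sending each vertex above `y` to the first edge on a geodesic towards `r` is injective, so the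
coefficient is at most `0`; otherwise it is at most `1`, and then `y ≤ a ∧ x`. The bound
`ψ(a ∧ x)` is attained by the path `a — a ∧ x — x` (with repeated vertices removed).

Along a linear extension this gives, by induction, that `φ_i` is the function whose Möbius inverse
is `f` restricted to `{a_i, a_{i+1}, …}`, and that `λ(φ_i; a_i, x)` is `f(a_i)` when `a_i ≤ x` and
`0` otherwise. Hence `φ_N = 0`. Finally a monotone nonnegative `Ψ` on `𝓛` with
`Ψ(⟨x⟩*) = c · [a ≤ x]` is forced to be `U ↦ c · [U ⊆ ⟨a⟩*]`, by comparing `U` with `⟨⊤⟩*`, `⟨a⟩*` and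
the principal up-sets `⟨x⟩*`, `x ∈ U` (`psi_eq`). Summing over `i` gives the claim.
-/

attribute [local instance 50] Classical.propDecidable

/-- `U` is a member of `𝓛`: a nonempty dual order ideal (up-set) of `L`. -/
def MemL {L : Type*} [Lattice L] (U : Finset L) : Prop :=
  (∀ ⦃x y : L⦄, x ∈ U → x ≤ y → y ∈ U) ∧ U.Nonempty

/-- The family `𝓛` of nonempty up-sets of `L`, as a finset of finsets. -/
noncomputable def LFam (L : Type*) [Lattice L] [Fintype L] : Finset (Finset L) :=
  Finset.univ.filter (fun U => MemL U)

/-- The successive difference operator on `𝓛` (ordered by reverse inclusion, so that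
the meet of two up-sets is their union): `∇_U Φ(W) = Φ(W) − Φ(W ⊓ U) = Φ(W) − Φ(W ∪ U)`,
iterated over a list. -/
def succDiffU {L : Type*} [Lattice L] [DecidableEq L]
    (Φ : Finset L → ℝ) (l : List (Finset L)) : Finset L → ℝ :=
  l.foldl (fun Ψ U => fun W => Ψ W - Ψ (W ∪ U)) Φ

/-- `Φ ∈ M_∞(𝓛)`: `Φ` is nonnegative and completely monotone on `𝓛`
(the empty list gives nonnegativity of `Φ` itself). -/
def Minf {L : Type*} [Lattice L] [DecidableEq L] (Φ : Finset L → ℝ) : Prop :=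
  ∀ l : List (Finset L), (∀ U ∈ l, MemL U) → ∀ W : Finset L, MemL W →
    0 ≤ succDiffU Φ l W

/-- The principal up-set `⟨x⟩* = {y ∈ L : y ≥ x}`. -/
noncomputable def pUp {L : Type*} [Lattice L] [Fintype L] (x : L) : Finset L :=
  Finset.univ.filter (fun y => x ≤ y)

/-- The up-set `⟨A⟩*` generated by `A ⊆ L`. -/
noncomputable def upGen {L : Type*} [Lattice L] [Fintype L] (A : Finset L) : Finset L :=
  Finset.univ.filter (fun y => ∃ a ∈ A, a ≤ y)

/-- `φ ∈ M_1(L)`: `φ` is nonnegative and monotone. -/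
def M1 {L : Type*} [Lattice L] (φ : L → ℝ) : Prop :=
  (∀ x, 0 ≤ φ x) ∧ Monotone φ

/-- `f` is the Möbius inverse of `Φ` on `𝓛`: `Φ(U) = Σ_{V ⪯ U} f(V)`,
where `V ⪯ U` means `U ⊆ V`. -/
def IsMobiusInvL {L : Type*} [Lattice L] [Fintype L] (Φ f : Finset L → ℝ) : Prop :=
  ∀ U : Finset L, MemL U → Φ U = ∑ V ∈ (LFam L).filter (fun V => U ⊆ V), f V

/-- A tree in `𝒯`: a connected acyclic simple graph whose (nonempty) vertex set is a
subset of `L`, given by its vertex finset and edge finset. -/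
structure FinTree (L : Type*) [Lattice L] where
  verts : Finset L
  edges : Finset (Sym2 L)
  nonempty : verts.Nonempty
  loopless : ∀ e ∈ edges, ¬ e.IsDiag
  edge_mem : ∀ e ∈ edges, ∀ x ∈ e, x ∈ verts
  connected : ∀ x ∈ verts, ∀ y ∈ verts,
    (SimpleGraph.fromEdgeSet (edges : Set (Sym2 L))).Reachable x y
  acyclic : (SimpleGraph.fromEdgeSet (edges : Set (Sym2 L))).IsAcyclic

/-- `φ(G) = Σ_{a ∈ G} φ(a) − Σ_{{a,b} ∈ E(G)} φ(a ∨ b)` for a tree `G ∈ 𝒯`. -/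
noncomputable def phiTree {L : Type*} [Lattice L] (φ : L → ℝ) (G : FinTree L) : ℝ :=
  (∑ a ∈ G.verts, φ a) -
    ∑ e ∈ G.edges, Sym2.lift ⟨fun a b => φ (a ⊔ b), fun a b => by simp [sup_comm]⟩ e

/-- `H` is a path from `a` to `b`: a tree in `𝒯` whose only leaves are `a` and `b`
(the one-vertex tree `{a}` being a path from `a` to `a`). -/
def IsPathTree {L : Type*} [Lattice L] (H : FinTree L) (a b : L) : Prop :=
  a ∈ H.verts ∧ b ∈ H.verts ∧
    ∀ x ∈ H.verts, (H.edges.filter (fun e => x ∈ e)).card ≤ 1 → x = a ∨ x = b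

/-- `λ(φ; a, b)`: the maximum of `φ(H)` over paths `H` from `a` to `b`. -/
noncomputable def lam {L : Type*} [Lattice L] (φ : L → ℝ) (a b : L) : ℝ :=
  sSup {r : ℝ | ∃ H : FinTree L, IsPathTree H a b ∧ phiTree φ H = r}

/-- The successive λ-difference operator `Λ_{a_1,…,a_n} φ`, with
`Λ_a φ(x) = φ(x) − λ(φ; a, x)` and `Λ_{a_1,…,a_n} φ = Λ_{a_n}(Λ_{a_1,…,a_{n−1}} φ)`. -/
noncomputable def lamSucc {L : Type*} [Lattice L] (φ : L → ℝ) (l : List L) : L → ℝ :=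
  l.foldl (fun ψ a => fun x => ψ x - lam ψ a x) φ

/-- The successive difference operator `∇_{a_1,…,a_n} φ` on `L`. -/
def succDiff {L : Type*} [Lattice L] (φ : L → ℝ) (l : List L) : L → ℝ :=
  l.foldl (fun ψ a => fun x => ψ x - ψ (x ⊓ a)) φ

/-- `φ` is completely monotone: all successive differences (`n ≥ 1`) are nonnegative. -/
def CMono {L : Type*} [Lattice L] (φ : L → ℝ) : Prop :=
  ∀ l : List L, l ≠ [] → ∀ x, 0 ≤ succDiff φ l x

/-- `f` is the Möbius inverse of `φ` on `L`: `φ(x) = Σ_{y ≤ x} f(y)`. -/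
def IsMobiusInv {L : Type*} [Lattice L] [Fintype L] (φ f : L → ℝ) : Prop :=
  ∀ x : L, φ x = ∑ y ∈ Finset.univ.filter (fun y => y ≤ x), f y

/-! ### Nonnegativity of the Möbius inverse -/

lemma succDiff_eq {L : Type*} [Lattice L] [Fintype L] (f : L → ℝ) (l : List L) :
    ∀ (φ : L → ℝ) (P : L → Prop), (∀ x, φ x = ∑ y, if y ≤ x ∧ P y then f y else 0) →
      ∀ x, succDiff φ l x = ∑ y, if y ≤ x ∧ P y ∧ ∀ b ∈ l, ¬ y ≤ b then f y else 0 := by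
  induction l with
  | nil => intro φ P h x; simpa [succDiff] using h x
  | cons c l ih =>
    intro φ P h x
    have := ih (fun x => φ x - φ (x ⊓ c)) (fun y => P y ∧ ¬ y ≤ c) (by
      intro x
      simp only [h, ← Finset.sum_sub_distrib]
      refine Finset.sum_congr rfl fun y _ => ?_
      by_cases h1 : y ≤ x <;> by_cases h2 : y ≤ c <;> by_cases h3 : P y <;> simp [h1, h2, h3]) x
    simp only [succDiff, List.foldl_cons] at this ⊢
    rw [this]
    refine Finset.sum_congr rfl fun y _ => ?_
    simp only [List.forall_mem_cons, and_assoc]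

lemma mobius_nonneg {L : Type*} [Lattice L] [Fintype L] (φ f : L → ℝ)
    (hpos : ∀ x, 0 ≤ φ x) (hcm : CMono φ)
    (hf : ∀ x, φ x = ∑ y, if y ≤ x then f y else 0) (x : L) : 0 ≤ f x := by
  -- The differences are taken along all elements that are not above `x`.
  set l : List L := (Finset.univ.filter (fun b : L => ¬ x ≤ b)).toList with hl
  have h1 : 0 ≤ succDiff φ l x := by
    by_cases h : l = []
    · rw [h]; exact hpos x
    · exact hcm l h x
  rw [succDiff_eq f l φ (fun _ => True) (by simpa using hf) x] at h1
  have h2 : ∀ y, (y ≤ x ∧ True ∧ ∀ b ∈ l, ¬ y ≤ b) ↔ y = x := by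
    intro y
    constructor
    · rintro ⟨hyx, -, h⟩
      by_contra hne
      have hxy : ¬ x ≤ y := fun hxy => hne (le_antisymm hyx hxy)
      exact h y (by simp [hl, hxy]) le_rfl
    · rintro rfl
      exact ⟨le_rfl, trivial, fun b hb => by simpa [hl] using hb⟩
  simp only [h2] at h1
  simpa using h1

/-! ### Upper bound for the value of a tree -/

/-- In a tree (only connectedness matters), the number of vertices of a set `S` avoiding the root `r` is at most
the number of edges touching `S`: each vertex of `S` owns the first edge of a geodesic to `r`. -/
lemma card_le_edges {L : Type*} [Lattice L] (H : FinTree L) (r : L) (hr : r ∈ H.verts)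
    (S : Finset L) (hS : S ⊆ H.verts) (hrS : r ∉ S) :
    S.card ≤ (H.edges.filter (fun e => ∃ v ∈ S, v ∈ e)).card := by
  set G := SimpleGraph.fromEdgeSet (H.edges : Set (Sym2 L)) with hG
  have key : ∀ v ∈ S, ∃ p, G.Adj v p ∧ G.dist p r < G.dist v r := by
    intro v hv
    obtain ⟨w, hw⟩ := (H.connected v (hS hv) r hr).exists_walk_length_eq_dist
    cases w with
    | nil => exact absurd hv hrS
    | cons h q =>
      refine ⟨_, h, ?_⟩
      rw [SimpleGraph.Walk.length_cons] at hw
      have hq := SimpleGraph.dist_le q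
      rw [hG]
      omega
  choose! p hp using key
  refine Finset.card_le_card_of_injOn (fun v => s(v, p v)) ?_ ?_
  · intro v hv
    have hv' : v ∈ S := hv
    have := (hp v hv').1
    rw [hG, SimpleGraph.fromEdgeSet_adj] at this
    exact Finset.mem_coe.2 <| Finset.mem_filter.2 ⟨by simpa using this.1, v, hv', Sym2.mem_mk_left _ _⟩
  · intro v hv w hw h
    rcases Sym2.eq_iff.1 h with h | h
    · exact h.1
    · -- A swapped edge would make each endpoint strictly closer to `r` than the other.
      have h1 := (hp v hv).2
      have h2 := (hp w hw).2
      rw [h.2] at h1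
      rw [← h.1] at h2
      omega

/-- The coefficient of `g y` in the Möbius expansion of the value of a tree. -/
lemma coeff_le {L : Type*} [Lattice L] (H : FinTree L) (y : L) :
    ((H.verts.filter (fun v => y ≤ v)).card : ℝ) - (H.edges.filter (fun e => y ≤ e.sup)).card
      ≤ if ∀ v ∈ H.verts, y ≤ v then 1 else 0 := by
  have touch : ∀ S ⊆ H.verts.filter (fun v => y ≤ v),
      (H.edges.filter (fun e => ∃ v ∈ S, v ∈ e)).card
        ≤ (H.edges.filter (fun e => y ≤ e.sup)).card := by
    intro S hS
    refine Finset.card_le_card fun e he => ?_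
    rw [Finset.mem_filter] at he ⊢
    obtain ⟨he, v, hv, hve⟩ := he
    refine ⟨he, (Finset.mem_filter.1 (hS hv)).2.trans ?_⟩
    induction e using Sym2.ind with
    | _ b c =>
      rw [Sym2.sup_mk]
      rcases Sym2.mem_iff.1 hve with rfl | rfl
      · exact le_sup_left
      · exact le_sup_right
  split_ifs with h
  · obtain ⟨r, hr⟩ := H.nonempty
    have hS : H.verts.filter (fun v => y ≤ v) = H.verts := Finset.filter_true_of_mem h
    have h1 := card_le_edges H r hr (H.verts.erase r) (Finset.erase_subset _ _) (by simp)
    have h2 := touch (H.verts.erase r) (by rw [hS]; exact Finset.erase_subset _ _)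
    have h3 := Finset.card_erase_add_one hr
    have h4 : H.verts.card ≤ (H.edges.filter (fun e => y ≤ e.sup)).card + 1 := by omega
    have h5 : (H.verts.card : ℝ) ≤ (H.edges.filter (fun e => y ≤ e.sup)).card + 1 := by
      exact_mod_cast h4
    rw [hS]
    linarith
  · push Not at h
    obtain ⟨r, hr, hry⟩ := h
    have h1 := card_le_edges H r hr (H.verts.filter (fun v => y ≤ v)) (Finset.filter_subset _ _)
      (by simp [hry])
    have h4 := h1.trans (touch _ subset_rfl)
    have h5 : ((H.verts.filter (fun v => y ≤ v)).card : ℝ)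
        ≤ (H.edges.filter (fun e => y ≤ e.sup)).card := by exact_mod_cast h4
    linarith

lemma phiTree_le {L : Type*} [Lattice L] [Fintype L] (ψ g : L → ℝ) (hg : ∀ y, 0 ≤ g y)
    (hψ : ∀ x, ψ x = ∑ y, if y ≤ x then g y else 0) (H : FinTree L) (a b : L)
    (ha : a ∈ H.verts) (hb : b ∈ H.verts) : phiTree ψ H ≤ ψ (a ⊓ b) := by
  have hedge : ∀ e : Sym2 L,
      Sym2.lift ⟨fun a b => ψ (a ⊔ b), fun a b => by simp [sup_comm]⟩ e
        = ∑ y, if y ≤ e.sup then g y else 0 := by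
    intro e
    induction e using Sym2.ind with
    | _ b c => rw [Sym2.lift_mk, Sym2.sup_mk]; exact hψ _
  have hval : phiTree ψ H = ∑ y, g y * (((H.verts.filter (fun v => y ≤ v)).card : ℝ)
      - (H.edges.filter (fun e => y ≤ e.sup)).card) := by
    unfold phiTree
    simp only [hedge]
    simp only [hψ]
    rw [Finset.sum_comm, Finset.sum_comm (s := H.edges), ← Finset.sum_sub_distrib]
    refine Finset.sum_congr rfl fun y _ => ?_
    rw [← Finset.sum_filter, ← Finset.sum_filter, Finset.sum_const, Finset.sum_const]
    simp only [nsmul_eq_mul]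
    ring
  rw [hval, hψ]
  refine Finset.sum_le_sum fun y _ => ?_
  refine (mul_le_mul_of_nonneg_left (coeff_le H y) (hg y)).trans ?_
  by_cases h : ∀ v ∈ H.verts, y ≤ v
  · rw [if_pos h, mul_one, if_pos (le_inf (h a ha) (h b hb))]
  · rw [if_neg h, mul_zero]
    split_ifs
    exacts [hg y, le_rfl]

/-! ### Building paths -/

/-- The one-vertex tree. -/
def FinTree.single {L : Type*} [Lattice L] (v : L) : FinTree L where
  verts := {v}
  edges := ∅
  nonempty := Finset.singleton_nonempty v
  loopless := by simp
  edge_mem := by simp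
  connected := by
    intro x hx y hy
    rw [Finset.mem_singleton] at hx hy
    rw [hx, hy]
  acyclic := by simp

/-- The tree obtained by attaching a new leaf `w` to the vertex `v`. -/
noncomputable def FinTree.addLeaf {L : Type*} [Lattice L] (T : FinTree L) (v w : L)
    (hv : v ∈ T.verts) (hw : w ∉ T.verts) : FinTree L where
  verts := insert w T.verts
  edges := insert s(v, w) T.edges
  nonempty := Finset.insert_nonempty _ _
  loopless := by
    intro e he
    rcases Finset.mem_insert.1 he with rfl | he
    · rw [Sym2.mk_isDiag_iff]
      rintro rfl
      exact hw hv
    · exact T.loopless e he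
  edge_mem := by
    intro e he x hx
    rcases Finset.mem_insert.1 he with rfl | he
    · rcases Sym2.mem_iff.1 hx with rfl | rfl
      · exact Finset.mem_insert_of_mem hv
      · exact Finset.mem_insert_self _ _
    · exact Finset.mem_insert_of_mem (T.edge_mem e he x hx)
  connected := by
    have hle : SimpleGraph.fromEdgeSet (T.edges : Set (Sym2 L)) ≤
        SimpleGraph.fromEdgeSet ((insert s(v, w) T.edges : Finset (Sym2 L)) : Set (Sym2 L)) :=
      SimpleGraph.fromEdgeSet_mono (by simp)
    have hr : ∀ x ∈ insert w T.verts, (SimpleGraph.fromEdgeSet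
        ((insert s(v, w) T.edges : Finset (Sym2 L)) : Set (Sym2 L))).Reachable v x := by
      intro x hx
      rcases Finset.mem_insert.1 hx with rfl | hx
      · refine SimpleGraph.Adj.reachable ?_
        rw [SimpleGraph.fromEdgeSet_adj]
        exact ⟨by simp, fun h => hw (h ▸ hv)⟩
      · exact (T.connected v hv x hx).mono hle
    exact fun x hx y hy => (hr x hx).symm.trans (hr y hy)
  acyclic := by
    have hnr : ¬ (SimpleGraph.fromEdgeSet (T.edges : Set (Sym2 L))).Reachable v w := by
      refine SimpleGraph.not_reachable_of_neighborSet_right_eq_empty (fun h => hw (h ▸ hv)) ?_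
      ext x
      simp only [SimpleGraph.mem_neighborSet, SimpleGraph.fromEdgeSet_adj,
        Set.mem_empty_iff_false, iff_false]
      exact fun h => hw (T.edge_mem _ h.1 w (Sym2.mem_mk_left _ _))
    have := T.acyclic.sup_edge_of_not_reachable hnr
    rw [SimpleGraph.edge, ← SimpleGraph.fromEdgeSet_union] at this
    rwa [Finset.coe_insert, Set.insert_eq, Set.union_comm]

@[simp] lemma FinTree.mem_single {L : Type*} [Lattice L] {v x : L} :
    x ∈ (FinTree.single v).verts ↔ x = v := Finset.mem_singleton

@[simp] lemma FinTree.mem_addLeaf {L : Type*} [Lattice L] {T : FinTree L} {v w : L}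
    {hv : v ∈ T.verts} {hw : w ∉ T.verts} {x : L} :
    x ∈ (T.addLeaf v w hv hw).verts ↔ x = w ∨ x ∈ T.verts := Finset.mem_insert

lemma phiTree_single {L : Type*} [Lattice L] (ψ : L → ℝ) (v : L) :
    phiTree ψ (FinTree.single v) = ψ v := by
  simp [phiTree, FinTree.single]

lemma phiTree_addLeaf {L : Type*} [Lattice L] (ψ : L → ℝ) (T : FinTree L) (v w : L)
    (hv : v ∈ T.verts) (hw : w ∉ T.verts) :
    phiTree ψ (T.addLeaf v w hv hw) = phiTree ψ T + ψ w - ψ (v ⊔ w) := by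
  have he : s(v, w) ∉ T.edges := fun h => hw (T.edge_mem _ h w (Sym2.mem_mk_right _ _))
  simp only [phiTree, FinTree.addLeaf]
  rw [Finset.sum_insert hw, Finset.sum_insert he, Sym2.lift_mk]
  ring

lemma exists_path {L : Type*} [Lattice L] (ψ : L → ℝ) (a b : L) :
    ∃ H : FinTree L, IsPathTree H a b ∧ phiTree ψ H = ψ (a ⊓ b) := by
  by_cases hab : a = b
  · subst hab
    exact ⟨FinTree.single a, by simp [IsPathTree], by simp [phiTree_single]⟩
  by_cases hc : a ≤ b ∨ b ≤ a
  · refine ⟨(FinTree.single a).addLeaf a b (by simp)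
      (by simpa using Ne.symm hab), ?_, ?_⟩
    · refine ⟨by simp, by simp, ?_⟩
      intro x hx _
      simpa [or_comm] using hx
    · rw [phiTree_addLeaf, phiTree_single]
      rcases hc with h | h
      · rw [sup_eq_right.2 h, inf_eq_left.2 h]; ring
      · rw [sup_eq_left.2 h, inf_eq_right.2 h]; ring
  · push Not at hc
    have h1 : a ⊓ b ≠ a := fun h => hc.1 (inf_eq_left.1 h)
    have h2 : a ⊓ b ≠ b := fun h => hc.2 (inf_eq_right.1 h)
    refine ⟨((FinTree.single (a ⊓ b)).addLeaf (a ⊓ b) a (by simp)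
      (by simpa using h1.symm)).addLeaf (a ⊓ b) b
        (by simp)
        (by simpa using ⟨Ne.symm hab, hc.2⟩), ?_, ?_⟩
    · refine ⟨by simp, by simp, ?_⟩
      intro x hx hcard
      have hx' : x = b ∨ x = a ∨ x = a ⊓ b := by
        simpa using hx
      rcases hx' with h | h | h
      · exact Or.inr h
      · exact Or.inl h
      · -- The middle vertex has degree two.
        exfalso
        rw [Finset.card_le_one] at hcard
        have := hcard s(a ⊓ b, a) (by simp [FinTree.addLeaf, FinTree.single, h])
          s(a ⊓ b, b) (by simp [FinTree.addLeaf, FinTree.single, h])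
        exact hab (Sym2.congr_right.1 this)
    · rw [phiTree_addLeaf, phiTree_addLeaf, phiTree_single, sup_eq_right.2 inf_le_left,
        sup_eq_right.2 inf_le_right]
      ring

lemma lam_eq {L : Type*} [Lattice L] [Fintype L] (ψ g : L → ℝ) (hg : ∀ y, 0 ≤ g y)
    (hψ : ∀ x, ψ x = ∑ y, if y ≤ x then g y else 0) (a b : L) : lam ψ a b = ψ (a ⊓ b) := by
  refine IsGreatest.csSup_eq ⟨exists_path ψ a b, ?_⟩
  rintro r ⟨H, hH, rfl⟩
  exact phiTree_le ψ g hg hψ H a b hH.1 hH.2.1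

/-! ### Rigidity of extensions of step functions -/

lemma pUp_mem {L : Type*} [Lattice L] [Fintype L] (x : L) : MemL (pUp x) := by
  refine ⟨fun y z hy hyz => ?_, x, by simp [pUp]⟩
  simp only [pUp, Finset.mem_filter, Finset.mem_univ, true_and] at hy ⊢
  exact hy.trans hyz

lemma Minf.anti {L : Type*} [Lattice L] [DecidableEq L] {Ψ : Finset L → ℝ}
    (h : Minf Ψ) {U V : Finset L} (hU : MemL U) (hV : MemL V) (hUV : U ⊆ V) : Ψ V ≤ Ψ U := by
  have := h [V] (by simpa using hV) U hU
  simp only [succDiffU, List.foldl_cons, List.foldl_nil, Finset.union_eq_right.2 hUV] at this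
  linarith

lemma psi_eq {L : Type*} [Lattice L] [Fintype L] [BoundedOrder L] [DecidableEq L]
    {Ψ : Finset L → ℝ} (h : Minf Ψ) (a : L) (c : ℝ)
    (hΨ : ∀ x, Ψ (pUp x) = if a ≤ x then c else 0) {U : Finset L} (hU : MemL U) :
    Ψ U = if U ⊆ pUp a then c else 0 := by
  have hsub : ∀ x ∈ U, pUp x ⊆ U := fun x hx y hy =>
    hU.1 hx (by simpa [pUp] using hy)
  split_ifs with hUa
  · obtain ⟨u, hu⟩ := hU.2
    refine le_antisymm ?_ ?_
    · have := h.anti (pUp_mem ⊤) hU (hsub ⊤ (hU.1 hu le_top))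
      simpa [hΨ] using this
    · have := h.anti hU (pUp_mem a) hUa
      simpa [hΨ] using this
  · obtain ⟨x, hx, hxa⟩ := Finset.not_subset.1 hUa
    have hax : ¬ a ≤ x := by simpa [pUp] using hxa
    refine le_antisymm ?_ (h [] (by simp) U hU)
    have := h.anti (pUp_mem x) hU (hsub x hx)
    simpa [hΨ, hax] using this

/-! ### The recursion along a linear extension -/

/-- When the Möbius inverse `g` of `ψ` vanishes strictly below `a`, `λ(ψ; a, ·)` is a step function. -/
lemma lam_min {L : Type*} [Lattice L] [Fintype L] (ψ g : L → ℝ) (hg : ∀ y, 0 ≤ g y)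
    (hψ : ∀ x, ψ x = ∑ y, if y ≤ x then g y else 0) (a : L) (ha : ∀ y < a, g y = 0) (x : L) :
    lam ψ a x = if a ≤ x then g a else 0 := by
  rw [lam_eq ψ g hg hψ, hψ, Finset.sum_eq_single a]
  · simp
  · intro y _ hya
    split_ifs with h
    · exact ha y (lt_of_le_of_ne (h.trans inf_le_left) hya)
    · rfl
  · simp

/-- For a linear extension `(a_1,…,a_N)` of `L` (`N = |L|`) and a nonnegative
completely monotone `φ` with Möbius inverse `f`, setting `φ_0 = φ` and
`φ_{i+1} = Λ_{a_{i+1}} φ_i`, we have `φ_N ≡ 0`, and for any `Ψ_0,…,Ψ_{N−1} ∈ M_∞(𝓛)`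
with `Π(Ψ_i) = λ(φ_i; a_{i+1}, ·)`, the sum `Φ = Σ_{i<N} Ψ_i` is the Möbius extension
of `φ`: `Φ(U) = Σ{f(x) : ⟨x⟩* ⪯ U}` for every `U ∈ 𝓛`. -/
theorem stmt_16 {L : Type*} [Lattice L] [Fintype L] [BoundedOrder L] [DecidableEq L]
    (φ f : L → ℝ) (hpos : ∀ x, 0 ≤ φ x) (hcm : CMono φ) (hf : IsMobiusInv φ f)
    (N : ℕ) (hN : N = Fintype.card L) (a : ℕ → L)
    (hsurj : ∀ x : L, ∃ i < N, a i = x)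
    (hinj : ∀ i < N, ∀ j < N, a i = a j → i = j)
    (hmono : ∀ i < N, ∀ j < N, a i < a j → i < j)
    (φs : ℕ → L → ℝ) (hφ0 : φs 0 = φ)
    (hφs : ∀ i < N, φs (i + 1) = fun x => φs i x - lam (φs i) (a i) x) :
    (∀ x : L, φs N x = 0) ∧
      ∀ Ψ : ℕ → Finset L → ℝ, (∀ i < N, Minf (Ψ i)) →
        (∀ i < N, ∀ x : L, Ψ i (pUp x) = lam (φs i) (a i) x) →
        ∀ U : Finset L, MemL U →
          (∑ i ∈ Finset.range N, Ψ i U) =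
            ∑ x ∈ Finset.univ.filter (fun x : L => U ⊆ pUp x), f x := by
  have hf' : ∀ x, φ x = ∑ y, if y ≤ x then f y else 0 := fun x => by
    rw [hf x, Finset.sum_filter]
  have hf0 := mobius_nonneg φ f hpos hcm hf'
  choose idx hidx haidx using hsurj
  have hidxa : ∀ i < N, idx (a i) = i := fun i hi => hinj _ (hidx _) _ hi (haidx _)
  -- The Möbius inverse of `φ_i` is `f` restricted to the elements of index at least `i`.
  have hg0 : ∀ i y, 0 ≤ (if i ≤ idx y then f y else 0) := fun i y => by
    split_ifs
    exacts [hf0 y, le_rfl]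
  have hmin : ∀ i < N, ∀ y < a i, (if i ≤ idx y then f y else 0) = 0 := by
    intro i hi y hy
    have := hmono (idx y) (hidx y) i hi (by rwa [haidx])
    exact if_neg (by omega)
  have hlam : ∀ i < N, (∀ x, φs i x = ∑ y, if y ≤ x then (if i ≤ idx y then f y else 0) else 0) →
      ∀ x, lam (φs i) (a i) x = if a i ≤ x then f (a i) else 0 := by
    intro i hi h x
    rw [lam_min (φs i) _ (hg0 i) h (a i) (hmin i hi) x, hidxa i hi, if_pos le_rfl]
  have hform : ∀ i ≤ N, ∀ x,
      φs i x = ∑ y, if y ≤ x then (if i ≤ idx y then f y else 0) else 0 := by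
    intro i
    induction i with
    | zero => intro _ x; simpa [hφ0] using hf' x
    | succ i ih =>
      intro hi x
      have ih := ih (by omega)
      have hstep : (if a i ≤ x then f (a i) else 0)
          = ∑ y, if y = a i then (if a i ≤ x then f (a i) else 0) else 0 := by simp
      rw [hφs i (by omega)]
      simp only
      rw [hlam i (by omega) ih, ih x, hstep, ← Finset.sum_sub_distrib]
      refine Finset.sum_congr rfl fun y _ => ?_
      by_cases hy : y = a i
      · subst hy
        simp [hidxa i (by omega)]
      · have hne : idx y ≠ i := fun h => hy (by rw [← h, haidx])
        have hiff : i + 1 ≤ idx y ↔ i ≤ idx y := by omega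
        simp [hy, hiff]
  refine ⟨fun x => ?_, fun Ψ hΨ hpr U hU => ?_⟩
  · rw [hform N le_rfl x]
    refine Finset.sum_eq_zero fun y _ => ?_
    have := hidx y
    simp [not_le.2 this]
  · have h1 : ∀ i ∈ Finset.range N, Ψ i U = if U ⊆ pUp (a i) then f (a i) else 0 := by
      intro i hi
      have hi := Finset.mem_range.1 hi
      exact psi_eq (hΨ i hi) (a i) (f (a i))
        (fun x => by rw [hpr i hi x, hlam i hi (hform i hi.le) x]) hU
    rw [Finset.sum_congr rfl h1, Finset.sum_filter]
    refine Finset.sum_nbij a (by simp) ?_ ?_ (fun i _ => rfl)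
    · intro i hi j hj h
      exact hinj i (by simpa using hi) j (by simpa using hj) h
    · intro x _
      exact ⟨idx x, by simpa using hidx x, haidx x⟩
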